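/- arXiv:2206.07561 — 4 statements merged into one kernel-verified Lean document; each statement's English description precedes it below -/
import Mathlib

section
/- Let t ≥ 2 be an integer and let G be the graph obtained by adding a universal vertex to the disjoint union of two cliques K_t, so that n = |V(G)| = 2t+1. Then the characteristic polynomial of the distance matrix of G satisfies det(D(G) − xI) = (x+1)^{2t−2} · (−(t+1) − x) · (x^2 − (3t−1)x − 2t); equivalently, det(xI − D(G)) = (x+1)^{2t−2} (x+t+1) (x^2 − (3t−1)x − 2t). -/
/-!
Sort the vertices into three classes: the universal vertex and the two cliques. Since
distinct vertices of one clique are at distance `1`, the entry of `D + I` at `(u, v)` depends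
only on the classes of `u` and `v`, so `D + I = P * W` factors through `ℝ³`, where `P` is the
class indicator matrix. As `P * W` and `W * P` have the same characteristic polynomial up to
powers of `X` (`Matrix.charpoly_mul_comm'`), that of `D + I` is `X ^ (2t - 2)` times the
characteristic polynomial of the `3 × 3` quotient matrix `W * P`. Shifting the variable by `1`
gives the one of `D`.
-/

open Polynomial

/-- The graph on `n = 2t+1` vertices consisting of two disjoint copies of the complete
graph `K_t` (indexed by `Fin 2 × Fin t`) together with one additional universal vertex
(`none`) adjacent to all other vertices. -/
def twoCliquesCone (t : ℕ) : SimpleGraph (Option (Fin 2 × Fin t)) :=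
  SimpleGraph.fromRel (fun u v => u = none ∨ ∃ p q, u = some p ∧ v = some q ∧ p.1 = q.1)

/-- The class of a vertex: `0` for the universal vertex, `1` and `2` for the two cliques. -/
def vertexClass (t : ℕ) : Option (Fin 2 × Fin t) → Fin 3
  | none => 0
  | some p => p.1.succ

/-- The common value of the entries of `D + I` between two given vertex classes. -/
def classMatrix : Matrix (Fin 3) (Fin 3) ℝ := !![1, 1, 1; 1, 1, 2; 1, 2, 1]

/-- The indicator matrix of the vertex classes. -/
def classIndicator (t : ℕ) : Matrix (Option (Fin 2 × Fin t)) (Fin 3) ℝ :=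
  Matrix.of fun u k => if vertexClass t u = k then 1 else 0

/-- The matrix `classMatrix` with its columns repeated along the vertices. -/
def classRows (t : ℕ) : Matrix (Fin 3) (Option (Fin 2 × Fin t)) ℝ :=
  Matrix.of fun k v => classMatrix k (vertexClass t v)

lemma adj_none_some (t : ℕ) (p : Fin 2 × Fin t) : (twoCliquesCone t).Adj none (some p) := by
  simp [twoCliquesCone]

lemma adj_some_some (t : ℕ) (p q : Fin 2 × Fin t) :
    (twoCliquesCone t).Adj (some p) (some q) ↔ p ≠ q ∧ p.1 = q.1 := by
  rw [twoCliquesCone, SimpleGraph.fromRel_adj]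
  constructor
  · rintro ⟨hne, (h | ⟨a, b, ha, hb, hab⟩) | (h | ⟨a, b, ha, hb, hab⟩)⟩ <;> grind
  · rintro ⟨hne, h⟩
    exact ⟨by simpa using hne, .inl (.inr ⟨p, q, rfl, rfl, h⟩)⟩

lemma dist_some_some_of_ne (t : ℕ) (p q : Fin 2 × Fin t) (h : p.1 ≠ q.1) :
    (twoCliquesCone t).dist (some p) (some q) = 2 := by
  let w : (twoCliquesCone t).Walk (some p) (some q) :=
    .cons (adj_none_some t p).symm (.cons (adj_none_some t q) .nil)
  have hle : (twoCliquesCone t).dist (some p) (some q) ≤ 2 := SimpleGraph.dist_le w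
  have h0 : (twoCliquesCone t).dist (some p) (some q) ≠ 0 := fun h0 => by
    have := (SimpleGraph.Reachable.dist_eq_zero_iff ⟨w⟩).1 h0
    grind
  have h1 : (twoCliquesCone t).dist (some p) (some q) ≠ 1 := fun h1 =>
    h ((adj_some_some t p q).1 (SimpleGraph.dist_eq_one_iff_adj.1 h1)).2
  omega

lemma distanceMatrix_add_one (t : ℕ) :
    (Matrix.of fun u v : Option (Fin 2 × Fin t) => ((twoCliquesCone t).dist u v : ℝ)) + 1 =
      classIndicator t * classRows t := by
  ext u v
  have hr : (classIndicator t * classRows t) u v =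
      classMatrix (vertexClass t u) (vertexClass t v) := by
    simp [Matrix.mul_apply, classIndicator, classRows]
  rw [hr, Matrix.add_apply, Matrix.of_apply]
  match u, v with
  | none, none => simp [vertexClass, classMatrix]
  | none, some q =>
    rw [SimpleGraph.dist_eq_one_iff_adj.2 (adj_none_some t q)]
    obtain ⟨i, j⟩ := q
    fin_cases i <;> simp [vertexClass, classMatrix]
  | some p, none =>
    rw [SimpleGraph.dist_eq_one_iff_adj.2 (adj_none_some t p).symm]
    obtain ⟨i, j⟩ := p
    fin_cases i <;> simp [vertexClass, classMatrix]
  | some p, some q =>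
    by_cases hpq : p = q
    · subst hpq
      obtain ⟨i, j⟩ := p
      fin_cases i <;> simp [vertexClass, classMatrix]
    · by_cases h : p.1 = q.1
      · rw [SimpleGraph.dist_eq_one_iff_adj.2 ((adj_some_some t p q).2 ⟨hpq, h⟩),
          Matrix.one_apply_ne (by simpa using hpq)]
        obtain ⟨i, j⟩ := p
        obtain ⟨i', j'⟩ := q
        obtain rfl : i = i' := h
        fin_cases i <;> simp [vertexClass, classMatrix]
      · rw [dist_some_some_of_ne t p q h, Matrix.one_apply_ne (by simpa using hpq)]
        obtain ⟨i, j⟩ := p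
        obtain ⟨i', j'⟩ := q
        fin_cases i <;> fin_cases i' <;> simp_all [vertexClass, classMatrix]

lemma classRows_mul_classIndicator (t : ℕ) :
    classRows t * classIndicator t =
      !![1, (t : ℝ), (t : ℝ); 1, (t : ℝ), t * 2; 1, t * 2, (t : ℝ)] := by
  ext k l
  fin_cases k <;> fin_cases l <;>
    simp [Matrix.mul_apply, classIndicator, classRows, vertexClass, classMatrix,
      Fintype.sum_option, Fintype.sum_prod_type]

/-- For `t ≥ 2`, the characteristic polynomial `det (x I - D)` of the distance matrix of
the cone over two disjoint cliques `K_t` equals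
`(x+1)^(2t-2) (x + t + 1) (x^2 - (3t-1) x - 2t)`; equivalently,
`det (D - x I) = (x+1)^(2t-2) (-(t+1) - x) (x^2 - (3t-1) x - 2t)`. -/
theorem twoCliquesCone_distanceMatrix_charpoly (t : ℕ) (ht : 2 ≤ t) :
    (Matrix.charpoly (Matrix.of fun u v : Option (Fin 2 × Fin t) =>
        ((twoCliquesCone t).dist u v : ℝ))) =
      (X + 1) ^ (2 * t - 2) * (X + C ((t : ℝ) + 1)) *
        (X ^ 2 - C (3 * (t : ℝ) - 1) * X - C (2 * (t : ℝ))) := by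
  have hcomm := Matrix.charpoly_mul_comm' (classIndicator t) (classRows t)
  have hquot : (classRows t * classIndicator t).charpoly =
      (X + C (t : ℝ)) * ((X - 1) ^ 2 - C (3 * (t : ℝ) - 1) * (X - 1) - C (2 * (t : ℝ))) := by
    rw [classRows_mul_classIndicator, Matrix.charpoly, Matrix.det_fin_three]
    have h2 : C (2 : ℝ) = 2 := rfl
    have h3 : C (3 : ℝ) = 3 := rfl
    simp [h2, h3]
    ring
  have hadd : (classIndicator t * classRows t).charpoly = X ^ (2 * t - 2) *
      ((X + C (t : ℝ)) *
        ((X - 1) ^ 2 - C (3 * (t : ℝ) - 1) * (X - 1) - C (2 * (t : ℝ)))) := by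
    refine mul_left_cancel₀ (pow_ne_zero 3 (X_ne_zero (R := ℝ))) ?_
    have hcard : Fintype.card (Option (Fin 2 × Fin t)) = 3 + (2 * t - 2) := by
      simp
      omega
    rw [Fintype.card_fin, hcard, hquot] at hcomm
    rw [hcomm, pow_add, mul_assoc]
  have hD : (Matrix.of fun u v : Option (Fin 2 × Fin t) => ((twoCliquesCone t).dist u v : ℝ)) =
      classIndicator t * classRows t - Matrix.scalar _ (1 : ℝ) := by
    rw [← distanceMatrix_add_one]
    simp
  rw [hD, Matrix.charpoly_sub_scalar, hadd]
  simp
  ring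
end

section
/- Let t ≥ 2 be an integer and let G be the graph obtained by adding a universal vertex to the disjoint union of two cliques K_t, so that n = |V(G)| = 2t+1. Then the sequence (−1)^{n−1} c_0(G), …, (−1)^{n−1} c_{n−2}(G) of coefficients of the distance characteristic polynomial of G is unimodal with peak at index ⌊n/2⌋ = t: the terms are nondecreasing up to index t and nonincreasing from index t on. -/
/-!
The vertex set splits into three classes (the apex and the two cliques), and the entries of
`D + I` depend only on the classes of the row and the column.  So `D + I = L * R` with inner
dimension `3`, and `charpoly (L * R) = X ^ (n - 3) * charpoly (R * L)` reduces the computation to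
a `3 × 3` determinant.  This gives
`charpoly D = (X + 1) ^ (2t - 2) * (X + t + 1) * (X² - (3t - 1) X - 2t)`.

Multiplying by `X - 1` turns consecutive coefficients into their differences: with `F k` the
coefficients of `(1 - X) (1 + X) ^ (2t - 2)`, the `i`-th difference of the normalized sequence is
`2t(t+1) F (i+1) + (3t²+4t-1) F i + (2t-2) F (i-1) - F (i-2)`.
Since `(2t - 1) F k = choose (2t - 1) k * (2t - 1 - 2k)`, the sign of `F` changes exactly between
`t - 1` and `t`, and `F k = -F (2t - 1 - k)`.  The last term, where it has the wrong sign, is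
dominated by `(2t-2) F (i-1)` thanks to the explicit ratio `F (k+1) / F k`.  Another term has the
wrong sign only for `i = t - 1` and `i = t`, where the antisymmetry lets the term in `F i`
absorb it.
-/

open Polynomial

/-- `distCoeff G k` is the coefficient `c_k(G)` of `x^k` in `det (D(G) - x I)`, where
`D(G)` is the distance matrix of `G`; note `det (D - x I) = (-1)^n det (x I - D)`. -/
noncomputable def distCoeff {V : Type*} [Fintype V] [DecidableEq V]
    (G : SimpleGraph V) (k : ℕ) : ℝ :=
  (-1 : ℝ) ^ (Fintype.card V) *
    (Matrix.charpoly (Matrix.of fun u v : V => (G.dist u v : ℝ))).coeff k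

/-- `(-1)^(n-1) c_i(G)` for the cone `G` over two disjoint cliques `K_t`, `n = 2t+1`. -/
noncomputable def twoCliquesConeNormCoeff (t i : ℕ) : ℝ :=
  (-1 : ℝ) ^ (2 * t + 1 - 1) * distCoeff (twoCliquesCone t) i

/-! ### The characteristic polynomial -/

/-- The class of a vertex: `0` for the apex, `1` and `2` for the two cliques. -/
def coneClass (t : ℕ) : Option (Fin 2 × Fin t) → Fin 3
  | none => 0
  | some p => p.1.succ

/-- The values of `D + I` on pairs of classes. -/
def coneQuotient : Matrix (Fin 3) (Fin 3) ℝ := !![1, 1, 1; 1, 1, 2; 1, 2, 1]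

theorem twoCliquesCone_dist_none_some (t : ℕ) (p : Fin 2 × Fin t) :
    (twoCliquesCone t).dist none (some p) = 1 := by
  rw [SimpleGraph.dist_eq_one_iff_adj]
  simp [twoCliquesCone]

theorem twoCliquesCone_dist_some_some (t : ℕ) (p q : Fin 2 × Fin t) :
    (twoCliquesCone t).dist (some p) (some q) =
      if p = q then 0 else if p.1 = q.1 then 1 else 2 := by
  split_ifs with h h'
  · simp [h]
  · rw [SimpleGraph.dist_eq_one_iff_adj]
    exact ⟨by simpa using h, .inl (.inr ⟨p, q, rfl, rfl, h'⟩)⟩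
  · have hp : (twoCliquesCone t).Adj (some p) none := by simp [twoCliquesCone]
    have hq : (twoCliquesCone t).Adj none (some q) := by simp [twoCliquesCone]
    have hle := SimpleGraph.dist_le (SimpleGraph.Walk.cons hp (SimpleGraph.Walk.cons hq .nil))
    have hlt := (hp.reachable.trans hq.reachable).one_lt_dist_of_ne_of_not_adj
      (by simpa using h) (by
        rintro ⟨-, (h0 | ⟨a, b, ha, hb, hab⟩) | (h0 | ⟨a, b, ha, hb, hab⟩)⟩ <;> simp_all)
    simp at hle
    omega

theorem twoCliquesCone_dist_eq (t : ℕ) (u v : Option (Fin 2 × Fin t)) :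
    ((twoCliquesCone t).dist u v : ℝ) =
      coneQuotient (coneClass t u) (coneClass t v) - if u = v then 1 else 0 := by
  rcases u with _ | ⟨a, x⟩ <;> rcases v with _ | ⟨b, y⟩
  · simp [coneQuotient, coneClass]
  · rw [twoCliquesCone_dist_none_some]
    fin_cases b <;> simp [coneQuotient, coneClass]
  · rw [SimpleGraph.dist_comm, twoCliquesCone_dist_none_some]
    fin_cases a <;> simp [coneQuotient, coneClass]
  · rw [twoCliquesCone_dist_some_some]
    fin_cases a <;> fin_cases b <;> by_cases h : x = y <;>
      simp [coneQuotient, coneClass, h]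

theorem charpoly_twoCliquesCone (t : ℕ) (ht : 2 ≤ t) :
    (Matrix.of fun u v => ((twoCliquesCone t).dist u v : ℝ)).charpoly =
      (X + 1) ^ (2 * t - 2) * (X ^ 3 - C (2 * t - 2 : ℝ) * X ^ 2
        - C (3 * t ^ 2 + 4 * t - 1 : ℝ) * X - C (2 * t * (t + 1) : ℝ)) := by
  let L : Matrix (Option (Fin 2 × Fin t)) (Fin 3) ℝ :=
    Matrix.of fun u c => if coneClass t u = c then 1 else 0
  let R : Matrix (Fin 3) (Option (Fin 2 × Fin t)) ℝ :=
    Matrix.of fun c v => coneQuotient c (coneClass t v)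
  have hD : (Matrix.of fun u v => ((twoCliquesCone t).dist u v : ℝ)) =
      L * R - Matrix.scalar _ 1 := by
    ext u v
    simp [twoCliquesCone_dist_eq, L, R, Matrix.mul_apply, Matrix.one_apply]
  have hRL : R * L = !![1, (t : ℝ), t; 1, t, 2 * t; 1, 2 * t, t] := by
    ext c d
    fin_cases c <;> fin_cases d <;>
      simp [R, L, Matrix.mul_apply, Fintype.sum_prod_type, coneClass, coneQuotient] <;> ring
  have hcard : Fintype.card (Option (Fin 2 × Fin t)) = 2 * t + 1 := by simp
  rw [hD, Matrix.charpoly_sub_scalar, Matrix.charpoly_mul_comm_of_le _ _ (by simp; omega), hRL,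
    hcard, Fintype.card_fin, show 2 * t + 1 - 3 = 2 * t - 2 by omega, mul_comp, pow_comp, X_comp,
    C_1]
  congr 1
  rw [Matrix.charpoly, Matrix.det_fin_three]
  have h2 : (C 2 : ℝ[X]) = 2 := map_ofNat C 2
  have h3 : (C 3 : ℝ[X]) = 3 := map_ofNat C 3
  have h4 : (C 4 : ℝ[X]) = 4 := map_ofNat C 4
  simp [h2, h3, h4]
  ring

/-! ### Differences of consecutive binomial coefficients -/

/-- The coefficient of `X ^ k` in `(1 - X) * (1 + X) ^ m`. -/
noncomputable def chooseDiff (m k : ℕ) : ℝ := ((1 - X : ℝ[X]) * (1 + X) ^ m).coeff k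

theorem mul_chooseDiff (m k : ℕ) :
    ((m : ℝ) + 1) * chooseDiff m k = ((m + 1).choose k : ℝ) * ((m : ℝ) + 1 - 2 * k) := by
  unfold chooseDiff
  rcases k with _ | k
  · simp [sub_mul, coeff_one_add_X_pow]
  · rw [sub_mul, one_mul, coeff_sub, coeff_X_mul, coeff_one_add_X_pow, coeff_one_add_X_pow]
    have h1 : ((m : ℝ) + 1) * m.choose k = (m + 1).choose (k + 1) * (k + 1) := by
      exact_mod_cast Nat.add_one_mul_choose_eq m k
    have h2 : ((m + 1).choose (k + 1) : ℝ) = m.choose k + m.choose (k + 1) := by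
      exact_mod_cast Nat.choose_succ_succ m k
    push_cast
    linear_combination (-2) * h1 - ((m : ℝ) + 1) * h2

theorem chooseDiff_nonneg {m k : ℕ} (h : 2 * k ≤ m + 1) : 0 ≤ chooseDiff m k := by
  have h1 := mul_chooseDiff m k
  have h2 : (2 * k : ℝ) ≤ m + 1 := by exact_mod_cast h
  have h3 : 0 ≤ ((m + 1).choose k : ℝ) * ((m : ℝ) + 1 - 2 * k) :=
    mul_nonneg (by positivity) (by linarith)
  rw [← h1] at h3
  exact nonneg_of_mul_nonneg_right h3 (by positivity)

theorem chooseDiff_antisymm {m j k : ℕ} (h : j + k = m + 1) :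
    chooseDiff m j = -chooseDiff m k := by
  have h1 := mul_chooseDiff m k
  have h2 := mul_chooseDiff m j
  have h3 : (m + 1).choose j = (m + 1).choose k := Nat.choose_symm_of_eq_add (by omega)
  have h4 : (j : ℝ) + k = m + 1 := by exact_mod_cast h
  rw [h3] at h2
  have h5 : ((m : ℝ) + 1) ≠ 0 := by positivity
  apply mul_left_cancel₀ h5
  linear_combination h2 + h1 - 2 * ((m + 1).choose k : ℝ) * h4

theorem chooseDiff_nonpos {m k : ℕ} (h : m + 1 ≤ 2 * k) : chooseDiff m k ≤ 0 := by
  have h1 := mul_chooseDiff m k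
  have h2 : (m + 1 : ℝ) ≤ 2 * k := by exact_mod_cast h
  have h3 : ((m + 1).choose k : ℝ) * ((m : ℝ) + 1 - 2 * k) ≤ 0 :=
    mul_nonpos_of_nonneg_of_nonpos (by positivity) (by linarith)
  rw [← h1] at h3
  exact nonpos_of_mul_nonpos_right h3 (by positivity)

theorem chooseDiff_ratio (m k : ℕ) :
    ((k : ℝ) + 1) * (m + 1 - 2 * k) * chooseDiff m (k + 1) =
      (m + 1 - k) * (m - 1 - 2 * k) * chooseDiff m k := by
  have h1 := mul_chooseDiff m k
  have h2 := mul_chooseDiff m (k + 1)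
  have h3 : ((m + 1).choose (k + 1) : ℝ) * (k + 1) = (m + 1).choose k * (m + 1 - k) := by
    rcases le_or_gt k (m + 1) with hk | hk
    · have := Nat.choose_succ_right_eq (m + 1) k
      rw [← Nat.cast_inj (R := ℝ)] at this
      push_cast [Nat.cast_sub hk] at this
      exact this
    · simp [Nat.choose_eq_zero_of_lt hk, Nat.choose_eq_zero_of_lt (show m + 1 < k + 1 by omega)]
  have h5 : ((m : ℝ) + 1) ≠ 0 := by positivity
  apply mul_left_cancel₀ h5
  push_cast at h2
  linear_combination ((k : ℝ) + 1) * (m + 1 - 2 * k) * h2 - (m + 1 - k) * (m - 1 - 2 * k) * h1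
    + (m + 1 - 2 * k) * (m - 1 - 2 * k) * h3

/-- Where `choose m` increases, `F (k+1) / F k ≥ (m - 1 - 2k) / (m + 1 - 2k) ≥ 1 / 3`. -/
theorem chooseDiff_le_three_mul {m k : ℕ} (h : 2 * k + 2 ≤ m) :
    chooseDiff m k ≤ 3 * chooseDiff m (k + 1) := by
  have hr := chooseDiff_ratio m k
  have h0 : 0 ≤ chooseDiff m k := chooseDiff_nonneg (by omega)
  have hm : (2 * k + 2 : ℝ) ≤ m := by exact_mod_cast h
  have hpos : 0 < ((k : ℝ) + 1) * (m + 1 - 2 * k) := mul_pos (by positivity) (by linarith)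
  refine le_of_mul_le_mul_left ?_ hpos
  have hk : (0 : ℝ) ≤ k := by positivity
  have : ((k : ℝ) + 1) * (m + 1 - 2 * k) ≤ 3 * ((m + 1 - k) * (m - 1 - 2 * k)) := by
    nlinarith
  nlinarith [mul_le_mul_of_nonneg_right this h0]

/-- Where `choose m` decreases, `F (k+1) / F k ≥ (m + 1 - k) / (k + 1) ≥ 1 / m`. -/
theorem mul_chooseDiff_le {m k : ℕ} (h : m + 2 ≤ 2 * k) (hk : k + 1 ≤ m) :
    (m : ℝ) * chooseDiff m (k + 1) ≤ chooseDiff m k := by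
  have hr := chooseDiff_ratio m k
  have h0 : chooseDiff m k ≤ 0 := chooseDiff_nonpos (by omega)
  have hm : (m + 2 : ℝ) ≤ 2 * k := by exact_mod_cast h
  have hk' : (k + 1 : ℝ) ≤ m := by exact_mod_cast hk
  have hpos : 0 < ((k : ℝ) + 1) * (2 * k - (m + 1)) := mul_pos (by positivity) (by linarith)
  refine le_of_mul_le_mul_left ?_ hpos
  have : ((k : ℝ) + 1) * (2 * k - (m + 1)) ≤ m * ((m + 1 - k) * (2 * k + 1 - m)) := by
    have h1 : (k + 1 : ℝ) ≤ m * (m + 1 - k) := by nlinarith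
    have h2 : (2 * k - (m + 1) : ℝ) ≤ 2 * k + 1 - m := by linarith
    calc ((k : ℝ) + 1) * (2 * k - (m + 1)) ≤ (m * (m + 1 - k)) * (2 * k + 1 - m) :=
          mul_le_mul h1 h2 (by linarith) (le_trans (by positivity) h1)
      _ = _ := by ring
  have h3 := mul_le_mul_of_nonpos_right this h0
  linear_combination h3 - (m : ℝ) * hr

/-! ### Unimodality -/

/-- The normalized sequence consists of the negated coefficients of `charpoly D`, so its
differences are the coefficients of `(X - 1) * charpoly D`. -/
theorem normCoeff_sub (t : ℕ) (ht : 2 ≤ t) (i : ℕ) :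
    twoCliquesConeNormCoeff t (i + 1) - twoCliquesConeNormCoeff t i =
      (((1 - X) * (1 + X) ^ (2 * t - 2)) * (C (2 * t * (t + 1) : ℝ)
        + C (3 * t ^ 2 + 4 * t - 1 : ℝ) * X + C (2 * t - 2 : ℝ) * X ^ 2 - X ^ 3)).coeff (i + 1) := by
  have hn (j : ℕ) : twoCliquesConeNormCoeff t j =
      -(Matrix.of fun u v => ((twoCliquesCone t).dist u v : ℝ)).charpoly.coeff j := by
    have hcard : Fintype.card (Option (Fin 2 × Fin t)) = 2 * t + 1 := by simp
    rw [twoCliquesConeNormCoeff, distCoeff, hcard, ← mul_assoc, ← pow_add,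
      Odd.neg_one_pow ⟨2 * t, by omega⟩]
    ring
  rw [hn, hn]
  set P := (Matrix.of fun u v => ((twoCliquesCone t).dist u v : ℝ)).charpoly with hP
  have : ((1 - X) * (1 + X) ^ (2 * t - 2)) * (C (2 * t * (t + 1) : ℝ)
        + C (3 * t ^ 2 + 4 * t - 1 : ℝ) * X + C (2 * t - 2 : ℝ) * X ^ 2 - X ^ 3) = X * P - P := by
    rw [hP, charpoly_twoCliquesCone t ht]
    ring
  rw [this, coeff_sub, coeff_X_mul]
  ring

/-- The value of the difference; the two lowest indices involve fewer terms. -/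
theorem normCoeff_sub_eq (t : ℕ) (ht : 2 ≤ t) (i : ℕ) :
    twoCliquesConeNormCoeff t (i + 1) - twoCliquesConeNormCoeff t i =
      2 * t * (t + 1) * chooseDiff (2 * t - 2) (i + 1)
      + (3 * t ^ 2 + 4 * t - 1) * chooseDiff (2 * t - 2) i
      + (2 * t - 2) * (if 1 ≤ i then chooseDiff (2 * t - 2) (i - 1) else 0)
      - (if 2 ≤ i then chooseDiff (2 * t - 2) (i - 2) else 0) := by
  rw [normCoeff_sub t ht]
  unfold chooseDiff
  generalize (1 - X : ℝ[X]) * (1 + X) ^ (2 * t - 2) = W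
  rw [mul_sub, mul_add, mul_add, coeff_sub, coeff_add, coeff_add, mul_left_comm W, mul_left_comm W,
    coeff_mul_C, coeff_C_mul, coeff_C_mul, coeff_mul_X, coeff_mul_X_pow', coeff_mul_X_pow']
  simp only [show (2 ≤ i + 1) ↔ 1 ≤ i by omega, show (3 ≤ i + 1) ↔ 2 ≤ i by omega,
    show i + 1 - 2 = i - 1 by omega, show i + 1 - 3 = i - 2 by omega]
  ring

/-- For `t ≥ 2` and the graph `G` obtained by adding a universal vertex to two disjoint
cliques `K_t` (so `n = 2t+1`), the sequence `(-1)^(n-1) c_0(G), …, (-1)^(n-1) c_(n-2)(G)`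
is unimodal with peak at index `⌊n/2⌋ = t`: it is nondecreasing up to index `t` and
nonincreasing from index `t` on. -/
theorem twoCliquesCone_distCoeff_unimodal_peak (t : ℕ) (ht : 2 ≤ t) :
    (∀ i : ℕ, i < t →
      twoCliquesConeNormCoeff t i ≤ twoCliquesConeNormCoeff t (i + 1)) ∧
    (∀ i : ℕ, t ≤ i → i < 2 * t + 1 - 2 →
      twoCliquesConeNormCoeff t (i + 1) ≤ twoCliquesConeNormCoeff t i) := by
  have htR : (2 : ℝ) ≤ t := by exact_mod_cast ht
  have hm : ((2 * t - 2 : ℕ) : ℝ) = 2 * t - 2 := by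
    rw [Nat.cast_sub (by omega)]; push_cast; ring
  constructor
  · intro i hi
    rw [← sub_nonneg, normCoeff_sub_eq t ht]
    -- The first two terms: at `i = t - 1` the first equals `-2t(t+1) F i`, and
    -- `2t(t+1) ≤ 3t² + 4t - 1`.
    have h12 : 0 ≤ 2 * t * (t + 1) * chooseDiff (2 * t - 2) (i + 1)
        + (3 * t ^ 2 + 4 * t - 1) * chooseDiff (2 * t - 2) i := by
      have h0 : 0 ≤ chooseDiff (2 * t - 2) i := chooseDiff_nonneg (by omega)
      rcases eq_or_lt_of_le (show i + 1 ≤ t by omega) with h | h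
      · rw [chooseDiff_antisymm (show (i + 1) + i = 2 * t - 2 + 1 by omega)]
        have : (0 : ℝ) ≤ t ^ 2 + 2 * t - 1 := by nlinarith
        linear_combination mul_nonneg this h0
      · have h1 : 0 ≤ chooseDiff (2 * t - 2) (i + 1) := chooseDiff_nonneg (by omega)
        have : (0 : ℝ) ≤ 3 * t ^ 2 + 4 * t - 1 := by nlinarith
        positivity
    -- The last two terms: `F (i-2) ≤ 3 F (i-1)`, and `3 ≤ 2t - 2` because `2 ≤ i < t`.
    have h34 : 0 ≤ (2 * t - 2) * (if 1 ≤ i then chooseDiff (2 * t - 2) (i - 1) else 0)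
        - (if 2 ≤ i then chooseDiff (2 * t - 2) (i - 2) else 0) := by
      by_cases h2 : 2 ≤ i
      · obtain ⟨k, rfl⟩ := Nat.exists_eq_add_of_le' h2
        have h3 := chooseDiff_le_three_mul (show 2 * k + 2 ≤ 2 * t - 2 by omega)
        have h1 : 0 ≤ chooseDiff (2 * t - 2) (k + 1) := chooseDiff_nonneg (by omega)
        have ht3 : (3 : ℝ) ≤ t := by exact_mod_cast (show 3 ≤ t by omega)
        rw [if_pos (by omega), if_pos h2, show k + 2 - 1 = k + 1 by omega, Nat.add_sub_cancel]
        nlinarith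
      · rw [if_neg h2, sub_zero]
        refine mul_nonneg (by linarith) ?_
        split_ifs
        · exact chooseDiff_nonneg (by omega)
        · exact le_rfl
    linarith
  · intro i hi hi'
    rw [← sub_nonpos, normCoeff_sub_eq t ht, if_pos (by omega), if_pos (by omega)]
    obtain ⟨k, rfl⟩ := Nat.exists_eq_add_of_le' (show 2 ≤ i by omega)
    rw [show k + 2 - 1 = k + 1 by omega, Nat.add_sub_cancel]
    have h1 : chooseDiff (2 * t - 2) (k + 2 + 1) ≤ 0 := chooseDiff_nonpos (by omega)
    have h2 : chooseDiff (2 * t - 2) (k + 2) ≤ 0 := chooseDiff_nonpos (by omega)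
    have hA : 2 * t * (t + 1) * chooseDiff (2 * t - 2) (k + 2 + 1) ≤ 0 :=
      mul_nonpos_of_nonneg_of_nonpos (by positivity) h1
    have hB : (3 * t ^ 2 + 4 * t - 1) * chooseDiff (2 * t - 2) (k + 2) ≤ 0 :=
      mul_nonpos_of_nonneg_of_nonpos (by nlinarith) h2
    rcases lt_or_ge k t with hk | hk
    · have h0 : 0 ≤ chooseDiff (2 * t - 2) k := chooseDiff_nonneg (by omega)
      rcases eq_or_lt_of_le hi with h | h
      -- At `i = t` the third term has the wrong sign, and `F (i-1) = - F i`.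
      · rw [chooseDiff_antisymm (show (k + 1) + (k + 2) = 2 * t - 2 + 1 by omega)]
        have : (0 : ℝ) ≤ 3 * t ^ 2 + 2 * t + 1 := by positivity
        linear_combination hA + h0 + mul_nonpos_of_nonneg_of_nonpos this h2
      · have h3 : (2 * t - 2) * chooseDiff (2 * t - 2) (k + 1) ≤ 0 :=
          mul_nonpos_of_nonneg_of_nonpos (by linarith) (chooseDiff_nonpos (by omega))
        linarith
    · have h3 := mul_chooseDiff_le (show 2 * t - 2 + 2 ≤ 2 * k by omega)
        (show k + 1 ≤ 2 * t - 2 by omega)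
      rw [hm] at h3
      linarith
end

section
/- Let t ≥ 3 be an integer and let B(t,2) be the barbell graph on n = 2t vertices obtained by joining two disjoint cliques K_t by an edge. Then the characteristic polynomial of its distance matrix satisfies det(xI − D(B(t,2))) = (x+1)^{2t−4} · (x^4 − (2t−4)x^3 − (8t^2−4t−4)x^2 − (14t^2−12t)x − (5t^2−4t)). -/
/-!
Write `D` for the distance matrix. Two distinct vertices of the same clique are at distance `1`,
and `(0,i)`, `(1,j)` are at distance `1 + [i ≠ 0] + [j ≠ 0]` (`barbellTwo_dist`): the upper bound
is the walk through the bridge, the lower bound comes from a `1`-Lipschitz function on the vertices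
attaining this difference (`le_dist_of_lipschitz`).

Hence `D + I` has rank at most four: it equals `P * Q`, where the columns of `P` are the indicator
vectors of the two cliques and of the two bridge ends, and the rows of `Q` are integer combinations
of these vectors. Since `det (y I - P * Q) = y ^ (2t - 4) * det (y I - Q * P)`, the
characteristic polynomial of `D = P * Q - I` follows from that of the `4 × 4` matrix `Q * P` by
substituting `y = x + 1`.
-/

open Polynomial

/-- The barbell graph `B(t,2)` on `n = 2t` vertices: two disjoint copies of the clique
`K_t` (indexed by `Fin 2 × Fin t`) joined by the single edge between `(0,0)` and `(1,0)`. -/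
def barbellTwo (t : ℕ) : SimpleGraph (Fin 2 × Fin t) :=
  SimpleGraph.fromRel (fun u v =>
    u.1 = v.1 ∨ (u.1 = 0 ∧ v.1 = 1 ∧ (u.2 : ℕ) = 0 ∧ (v.2 : ℕ) = 0))

theorem le_dist_of_lipschitz {V : Type*} {G : SimpleGraph V} (hG : G.Connected) (f : V → ℤ)
    (hf : ∀ u v, G.Adj u v → f v - f u ≤ 1) (u v : V) : f v - f u ≤ G.dist u v := by
  obtain ⟨p, hp⟩ := hG.exists_walk_length_eq_dist u v
  rw [← hp]
  clear hp
  induction p with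
  | nil => simp
  | cons h p ih =>
    have := hf _ _ h
    simp only [SimpleGraph.Walk.length_cons]
    push_cast
    lia

theorem barbellTwo_adj {t : ℕ} (u v : Fin 2 × Fin t) :
    (barbellTwo t).Adj u v ↔
      u ≠ v ∧ (u.1 = v.1 ∨ ((u.2 : ℕ) = 0 ∧ (v.2 : ℕ) = 0)) := by
  obtain ⟨a, i⟩ := u
  obtain ⟨b, j⟩ := v
  simp only [barbellTwo, SimpleGraph.fromRel_adj]
  fin_cases a <;> fin_cases b <;> simp <;> tauto

theorem barbellTwo_dist_same {t : ℕ} (a : Fin 2) (i j : Fin t) :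
    (barbellTwo t).dist (a, i) (a, j) = if i = j then 0 else 1 := by
  split_ifs with h
  · simp [h]
  · rw [SimpleGraph.dist_eq_one_iff_adj, barbellTwo_adj]
    simp [h]

theorem barbellTwo_connected (s : ℕ) : (barbellTwo (s + 1)).Connected := by
  have hin : ∀ (a : Fin 2) (i j : Fin (s + 1)), (barbellTwo (s + 1)).Reachable (a, i) (a, j) := by
    intro a i j
    by_cases h : i = j
    · rw [h]
    · exact SimpleGraph.Adj.reachable ((barbellTwo_adj _ _).2 (by simp [h]))
  have hbr : ∀ a b : Fin 2, (barbellTwo (s + 1)).Reachable (a, 0) (b, 0) := by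
    intro a b
    by_cases h : a = b
    · rw [h]
    · exact SimpleGraph.Adj.reachable ((barbellTwo_adj _ _).2 (by simp [h]))
  have : (barbellTwo (s + 1)).Preconnected := fun ⟨a, i⟩ ⟨b, j⟩ =>
    (hin a i 0).trans ((hbr a b).trans (hin b 0 j))
  exact ⟨this⟩

theorem barbellTwo_dist_cross (s : ℕ) (i j : Fin (s + 1)) :
    (barbellTwo (s + 1)).dist (0, i) (1, j) =
      1 + (if i = 0 then 0 else 1) + (if j = 0 then 0 else 1) := by
  have hc := barbellTwo_connected s
  apply le_antisymm
  · have h1 := hc.dist_triangle (u := ((0, i) : Fin 2 × Fin (s + 1))) (v := (0, 0)) (w := (1, j))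
    have h2 := hc.dist_triangle (u := ((0, 0) : Fin 2 × Fin (s + 1))) (v := (1, 0)) (w := (1, j))
    have h3 : (barbellTwo (s + 1)).dist (0, 0) (1, 0) = 1 := by
      rw [SimpleGraph.dist_eq_one_iff_adj, barbellTwo_adj]
      simp
    rw [barbellTwo_dist_same] at h1 h2
    simp only [eq_comm (a := (0 : Fin (s + 1))) (b := j)] at h2
    lia
  · -- The signed distance to the bridge end `(0,0)`, negative on the first clique.
    have h := le_dist_of_lipschitz hc
      (fun u => if u.1 = 0 then (if u.2 = 0 then 0 else -1) else (if u.2 = 0 then 1 else 2))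
      (by
        rintro ⟨a, i⟩ ⟨b, j⟩ hadj
        rw [barbellTwo_adj] at hadj
        obtain ⟨-, h | h⟩ := hadj
        · simp only at h
          subst h
          dsimp only
          split_ifs <;> simp
        · have hi : i = 0 := Fin.ext h.1
          have hj : j = 0 := Fin.ext h.2
          subst hi hj
          dsimp only
          split_ifs <;> simp_all)
      (0, i) (1, j)
    simp only [if_true, one_ne_zero, if_false] at h
    split_ifs at h ⊢ <;> lia

theorem barbellTwo_dist (s : ℕ) (u v : Fin 2 × Fin (s + 1)) :
    (barbellTwo (s + 1)).dist u v =
      if u.1 = v.1 then (if u.2 = v.2 then 0 else 1)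
      else 1 + (if u.2 = 0 then 0 else 1) + (if v.2 = 0 then 0 else 1) := by
  obtain ⟨a, i⟩ := u
  obtain ⟨b, j⟩ := v
  split_ifs with h
  all_goals dsimp only at *
  any_goals subst h
  any_goals simp_all [barbellTwo_dist_same]; done
  all_goals
    obtain ⟨rfl, rfl⟩ | ⟨rfl, rfl⟩ : (a = 0 ∧ b = 1) ∨ (a = 1 ∧ b = 0) := by omega
    · simp [barbellTwo_dist_cross, *]
    · rw [SimpleGraph.dist_comm]
      simp [barbellTwo_dist_cross, *]

/-- The columns are the indicator vectors of the two cliques and of the two bridge ends. -/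
def barbellP (s : ℕ) : Matrix (Fin 2 × Fin (s + 1)) (Fin 4) ℝ :=
  Matrix.of fun u =>
    ![if u.1 = 0 then 1 else 0, if u.1 = 1 then 1 else 0,
      if u.1 = 0 ∧ u.2 = 0 then 1 else 0, if u.1 = 1 ∧ u.2 = 0 then 1 else 0]

/-- With `a`, `b`, `p`, `q` the columns of `barbellP s`, the rows are
`a + 3 b - q`, `3 a + b - p`, `-b`, `-a`. -/
def barbellQ (s : ℕ) : Matrix (Fin 4) (Fin 2 × Fin (s + 1)) ℝ :=
  (!![1, 3, 0, -1; 3, 1, -1, 0; 0, -1, 0, 0; -1, 0, 0, 0] : Matrix (Fin 4) (Fin 4) ℝ) *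
    (barbellP s).transpose

theorem barbellP_mul_barbellQ (s : ℕ) :
    (Matrix.of fun u v : Fin 2 × Fin (s + 1) => ((barbellTwo (s + 1)).dist u v : ℝ)) =
      barbellP s * barbellQ s - Matrix.scalar _ 1 := by
  ext ⟨a, i⟩ ⟨b, j⟩
  rw [Matrix.of_apply, barbellTwo_dist]
  simp only [barbellQ, barbellP, Matrix.sub_apply, Matrix.mul_apply, Fin.sum_univ_four,
    Matrix.transpose_apply, Matrix.of_apply, Matrix.scalar_apply, Matrix.diagonal_apply,
    Prod.mk.injEq]
  fin_cases a <;> fin_cases b <;> by_cases hi : i = 0 <;> by_cases hj : j = 0 <;>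
    by_cases hij : i = j <;> simp [hi, hj, hij] <;> norm_num <;> simp_all

theorem barbellP_gram (s : ℕ) :
    (barbellP s).transpose * barbellP s =
      !![(s : ℝ) + 1, 0, 1, 0; 0, (s : ℝ) + 1, 0, 1; 1, 0, 1, 0; 0, 1, 0, 1] := by
  ext k l
  simp only [Matrix.mul_apply, barbellP, Matrix.transpose_apply, Matrix.of_apply,
    Fintype.sum_prod_type, Fin.sum_univ_two]
  fin_cases k <;> fin_cases l <;> simp

theorem barbellQ_mul_barbellP (s : ℕ) :
    barbellQ s * barbellP s =
      !![(s : ℝ) + 1, 3 * s + 2, 1, 2; 3 * s + 2, s + 1, 2, 1; 0, -(s + 1), 0, -1;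
        -(s + 1), 0, -1, 0] := by
  rw [barbellQ, Matrix.mul_assoc, barbellP_gram]
  ext k l
  fin_cases k <;> fin_cases l <;> simp [Matrix.mul_apply, Fin.sum_univ_four] <;> ring

/-- For `t ≥ 3`, the characteristic polynomial `det (x I - D)` of the distance matrix of
the barbell graph `B(t,2)` equals
`(x+1)^(2t-4) (x^4 - (2t-4) x^3 - (8t^2-4t-4) x^2 - (14t^2-12t) x - (5t^2-4t))`. -/
theorem barbellTwo_distanceMatrix_charpoly (t : ℕ) (ht : 3 ≤ t) :
    (Matrix.charpoly (Matrix.of fun u v : Fin 2 × Fin t =>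
        ((barbellTwo t).dist u v : ℝ))) =
      (X + 1) ^ (2 * t - 4) *
        (X ^ 4 - C (2 * (t : ℝ) - 4) * X ^ 3 - C (8 * (t : ℝ) ^ 2 - 4 * (t : ℝ) - 4) * X ^ 2 -
          C (14 * (t : ℝ) ^ 2 - 12 * (t : ℝ)) * X - C (5 * (t : ℝ) ^ 2 - 4 * (t : ℝ))) := by
  obtain ⟨s, rfl⟩ : ∃ s, t = s + 1 := ⟨t - 1, by omega⟩
  rw [barbellP_mul_barbellQ, Matrix.charpoly_sub_scalar,
    Matrix.charpoly_mul_comm_of_le _ _ (by simp; omega), barbellQ_mul_barbellP]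
  simp only [Polynomial.mul_comp, Polynomial.pow_comp, Polynomial.X_comp, Fintype.card_prod,
    Fintype.card_fin, map_one]
  congr 1
  rw [Matrix.charpoly, Matrix.det_succ_row_zero]
  simp [Fin.sum_univ_succ, Matrix.det_fin_three, Matrix.charmatrix_apply, Fin.succAbove,
    Matrix.submatrix_apply, Matrix.diagonal_apply]
  have hC (n : ℕ) [n.AtLeastTwo] : (C (OfNat.ofNat n : ℝ)) = OfNat.ofNat n := map_ofNat C n
  simp only [hC]
  ring
end

section
/- Let t ≥ 3 and ℓ ∈ {2,3,4,5} be integers and let B(t,ℓ) be the barbell graph on n = 2t + ℓ − 2 vertices. Then the sequence (−1)^{n−1} c_0(B(t,ℓ)), …, (−1)^{n−1} c_{n−2}(B(t,ℓ)) of coefficients of the distance characteristic polynomial is unimodal with peak at index t−1 if ℓ = 2, and with peak at index t if ℓ ∈ {3,4,5}. -/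
/-- The barbell graph `B(t,ℓ)` on `n = 2t + ℓ - 2` vertices: vertices `0, …, t-1` form a
clique `K_t`, vertices `t+ℓ-2, …, 2t+ℓ-3` form a second clique `K_t`, and vertices
`t-1, t, …, t+ℓ-2` form a path on `ℓ` vertices whose endpoints `t-1` and `t+ℓ-2` are
identified with a vertex of the first and the second clique respectively. -/
def barbell (t l : ℕ) : SimpleGraph (Fin (2 * t + l - 2)) :=
  SimpleGraph.fromRel (fun u v =>
    ((u : ℕ) < t ∧ (v : ℕ) < t) ∨
    (t + l - 2 ≤ (u : ℕ) ∧ t + l - 2 ≤ (v : ℕ)) ∨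
    (t - 1 ≤ (u : ℕ) ∧ (v : ℕ) = (u : ℕ) + 1 ∧ (u : ℕ) + 1 ≤ t + l - 2))

/-- `(-1)^(n-1) c_i(B(t,ℓ))` for the barbell graph on `n = 2t + ℓ - 2` vertices. -/
noncomputable def barbellNormCoeff (t l i : ℕ) : ℝ :=
  (-1 : ℝ) ^ (2 * t + l - 2 - 1) * distCoeff (barbell t l) i


/-!
Let `D` be the distance matrix of `B(t,l)` and give each vertex its position `0, …, l + 1` along the
barbell. Distinct vertices lie at distance `|a - b|` if their positions `a, b` differ and `1`
otherwise, so `D + I` only depends on positions. It follows (`charpoly_dist`) that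
`charpoly D = (X + 1) ^ (2t - 4) * q`, with `q` the shifted characteristic polynomial of
a weighted matrix of size `l + 2`. Its reflection symmetry makes `q` easy to compute for
`l = 2, …, 5` (`quot_charpoly_2` to `quot_charpoly_5`); its coefficients are quadratic in `t`.

The normalized coefficients of the theorem are those of `(X + 1) ^ m * (-q)`, `m = 2t - 4`, that is,
sums of at most eight terms `r_j * choose m (k - j)`. Multiplying by factorials turns the difference
of two consecutive ones into a polynomial in `t` and `k` (`coeff_sub_coeff`). On each side of the
claimed peak the indices are parametrized by two natural numbers `s, u`, and the polynomial,
rewritten in them, has coefficients of one sign (`gap_left_2` to `gap_right_5`) once the finitely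
many small `(s, u)` excluded by `t ≥ 3` are shifted away.
-/

open Polynomial

namespace Barbell

/-! ### Distances and the quotient by positions -/

/-- The position of vertex `u` along the barbell: `0` for the `t - 1` non-cut vertices of the first
clique, `1, …, l` for the path vertices, and `l + 1` for the non-cut vertices of the second clique.
The truncated subtraction sends all of `0, …, t - 2` to position `0`. -/
def cls (t l u : ℕ) : ℕ := min (u - (t - 2)) (l + 1)

/-- Two distinct vertices are adjacent exactly when their positions differ by at most one. -/
lemma adj_iff {t l : ℕ} (ht : 3 ≤ t) (hl : 2 ≤ l) (u v : Fin (2 * t + l - 2)) :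
    (barbell t l).Adj u v ↔
      u ≠ v ∧ cls t l u ≤ cls t l v + 1 ∧ cls t l v ≤ cls t l u + 1 := by
  simp only [barbell, SimpleGraph.fromRel_adj, cls]
  have := u.isLt
  have := v.isLt
  refine and_congr_right fun h => ?_
  have h' : (u : ℕ) ≠ v := fun e => h (Fin.ext e)
  omega

/-- A walk raises the position by at most its length; this is the lower bound for distances. -/
lemma cls_le_of_walk {t l : ℕ} (ht : 3 ≤ t) (hl : 2 ≤ l) {u v : Fin (2 * t + l - 2)}
    (p : (barbell t l).Walk u v) : cls t l v ≤ cls t l u + p.length := by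
  induction p with
  | nil => simp
  | cons h p ih =>
    have := ((adj_iff ht hl _ _).1 h).2.2
    rw [SimpleGraph.Walk.length_cons]
    omega

/-- The upper bound for distances. Two vertices in the same position are still one step apart,
hence the `max`. -/
lemma exists_walk {t l : ℕ} (ht : 3 ≤ t) (hl : 2 ≤ l) (k : ℕ) :
    ∀ u v : Fin (2 * t + l - 2), u ≠ v → cls t l v = cls t l u + k →
      ∃ p : (barbell t l).Walk u v, p.length = max 1 k := by
  induction k with
  | zero =>
    intro u v huv h
    exact ⟨((adj_iff ht hl u v).2 ⟨huv, by omega, by omega⟩).toWalk, by simp⟩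
  | succ k ih =>
    intro u v huv h
    rcases Nat.eq_zero_or_pos k with rfl | hk
    · exact ⟨((adj_iff ht hl u v).2 ⟨huv, by omega, by omega⟩).toWalk, by simp⟩
    · have hv : cls t l v ≤ l + 1 := min_le_right _ _
      let w : Fin (2 * t + l - 2) := ⟨t - 2 + (cls t l u + 1), by omega⟩
      have hw : cls t l w = cls t l u + 1 := by
        change min (t - 2 + (cls t l u + 1) - (t - 2)) (l + 1) = _
        omega
      have huw : u ≠ w := fun e => by rw [← e] at hw; omega
      have hwv : w ≠ v := fun e => by rw [e] at hw; omega
      obtain ⟨p, hp⟩ := ih w v hwv (by omega)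
      refine ⟨SimpleGraph.Walk.cons ((adj_iff ht hl u w).2 ⟨huw, by omega, by omega⟩) p, ?_⟩
      rw [SimpleGraph.Walk.length_cons, hp]
      omega

lemma dist_of_le {t l : ℕ} (ht : 3 ≤ t) (hl : 2 ≤ l) {u v : Fin (2 * t + l - 2)}
    (huv : u ≠ v) (h : cls t l u ≤ cls t l v) :
    (barbell t l).dist u v = max 1 (cls t l v - cls t l u) := by
  obtain ⟨p, hp⟩ := exists_walk ht hl (cls t l v - cls t l u) u v huv (by omega)
  obtain ⟨p', hp'⟩ := p.reachable.exists_walk_length_eq_dist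
  have h1 := SimpleGraph.dist_le p
  have h2 := cls_le_of_walk ht hl p'
  have h3 := p.reachable.pos_dist_of_ne huv
  omega

/-- The `N × N` matrix with entries `|a - b|` off the diagonal and `1` on it. For `N = l + 2` it is
the quotient, by positions, of `D + I`, where `D` is the distance matrix of `B(t,l)`. -/
def kmat (N : ℕ) : Matrix (Fin N) (Fin N) ℝ :=
  Matrix.of fun a b => if a = b then 1 else |(a : ℝ) - (b : ℝ)|

/-- The number of vertices in position `a`: `t - 1` at the two ends, `1` in between. -/
def wt (t N : ℕ) (a : Fin N) : ℝ :=
  if (a : ℕ) = 0 ∨ (a : ℕ) + 1 = N then (t : ℝ) - 1 else 1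

/-- The position `cls` as an element of `Fin (l + 2)`. -/
def clsFin (t l : ℕ) (u : Fin (2 * t + l - 2)) : Fin (l + 2) :=
  ⟨cls t l u, Nat.lt_succ_of_le (min_le_right _ _)⟩

lemma dist_cast {t l : ℕ} (ht : 3 ≤ t) (hl : 2 ≤ l) {u v : Fin (2 * t + l - 2)}
    (huv : u ≠ v) :
    ((barbell t l).dist u v : ℝ) = kmat (l + 2) (clsFin t l u) (clsFin t l v) := by
  have key : ∀ u v : Fin (2 * t + l - 2), u ≠ v → cls t l u ≤ cls t l v →
      ((barbell t l).dist u v : ℝ) = kmat (l + 2) (clsFin t l u) (clsFin t l v) := by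
    intro u v huv h
    rw [dist_of_le ht hl huv h]
    simp only [kmat, Matrix.of_apply, clsFin, Fin.mk.injEq]
    split_ifs with e
    · simp [e]
    · rw [max_eq_right (by omega), Nat.cast_sub h, abs_sub_comm, abs_of_nonneg]
      rw [sub_nonneg]
      exact_mod_cast h
  rcases le_total (cls t l u) (cls t l v) with h | h
  · exact key u v huv h
  · rw [SimpleGraph.dist_comm, key v u huv.symm h]
    simp only [kmat, Matrix.of_apply, eq_comm, abs_sub_comm]

lemma sum_fiber {t l : ℕ} (ht : 3 ≤ t) (a : Fin (l + 2)) :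
    ∑ u : Fin (2 * t + l - 2), (if a = clsFin t l u then (1 : ℝ) else 0) = wt t (l + 2) a := by
  have h1 : ∀ u : Fin (2 * t + l - 2),
      (if a = clsFin t l u then (1 : ℝ) else 0) =
        (fun k : ℕ => if (a : ℕ) = cls t l k then (1 : ℝ) else 0) u := by
    intro u
    simp only [clsFin, Fin.ext_iff]
  rw [Finset.sum_congr rfl fun u _ => h1 u,
    Fin.sum_univ_eq_sum_range (fun k : ℕ => if (a : ℕ) = cls t l k then (1 : ℝ) else 0),
    Finset.sum_boole]
  have ha := a.isLt
  obtain ⟨s, rfl⟩ := Nat.exists_eq_add_of_le ht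
  unfold wt
  split_ifs with h
  · rcases h with h | h
    · have : (Finset.range (2 * (3 + s) + l - 2)).filter (fun k => (a : ℕ) = cls (3 + s) l k)
          = Finset.Ico 0 (s + 2) := by
        ext k
        simp only [Finset.mem_filter, Finset.mem_range, Finset.mem_Ico]
        unfold cls
        omega
      rw [this]
      simp
      ring
    · have : (Finset.range (2 * (3 + s) + l - 2)).filter (fun k => (a : ℕ) = cls (3 + s) l k)
          = Finset.Ico (s + l + 2) ((s + l + 2) + (s + 2)) := by
        ext k
        simp only [Finset.mem_filter, Finset.mem_range, Finset.mem_Ico]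
        unfold cls
        omega
      rw [this]
      simp
      ring
  · have : (Finset.range (2 * (3 + s) + l - 2)).filter (fun k => (a : ℕ) = cls (3 + s) l k)
          = {s + 1 + (a : ℕ)} := by
      ext k
      simp only [Finset.mem_filter, Finset.mem_range, Finset.mem_singleton]
      unfold cls
      omega
    rw [this]
    simp

/-- The `(u, v)` entry of `D + I` only depends on the positions of `u` and `v`, so `D + I` factors
through the `l + 2` positions; exchanging the two factors leaves the weighted quotient matrix and a power
of `X`, which the shift by `-I` turns into a power of `X + 1`. -/
lemma charpoly_dist {t l : ℕ} (ht : 3 ≤ t) (hl : 2 ≤ l) :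
    (Matrix.of fun u v : Fin (2 * t + l - 2) => ((barbell t l).dist u v : ℝ)).charpoly =
      (X + 1) ^ (2 * t - 4) *
        ((Matrix.diagonal (wt t (l + 2)) * kmat (l + 2)).charpoly).comp (X + 1) := by
  set c := clsFin t l
  have hD : (Matrix.of fun u v : Fin (2 * t + l - 2) => ((barbell t l).dist u v : ℝ)) =
      (kmat (l + 2)).submatrix c id *
        (1 : Matrix (Fin (l + 2)) (Fin (l + 2)) ℝ).submatrix id c - Matrix.scalar _ 1 := by
    rw [← Matrix.submatrix_mul _ _ c id c Function.bijective_id, Matrix.mul_one]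
    ext u v
    by_cases huv : u = v
    · subst huv
      simp [kmat]
    · simp [huv, dist_cast ht hl huv, c]
  have hQ : (1 : Matrix (Fin (l + 2)) (Fin (l + 2)) ℝ).submatrix id c *
      (kmat (l + 2)).submatrix c id = Matrix.diagonal (wt t (l + 2)) * kmat (l + 2) := by
    ext a b
    rw [Matrix.diagonal_mul, Matrix.mul_apply, ← sum_fiber ht a, Finset.sum_mul]
    refine Finset.sum_congr rfl fun u _ => ?_
    simp only [Matrix.submatrix_apply, Matrix.one_apply, id]
    split_ifs with h
    · rw [h]
    · simp
  rw [hD, Matrix.charpoly_sub_scalar, Matrix.charpoly_mul_comm_of_le _ _ (by simp; omega), hQ]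
  simp only [Fintype.card_fin, map_one, mul_comp, pow_comp, X_comp]
  congr 2
  omega

/-! ### Characteristic polynomials of the quotient matrices -/

/-- If `M` preserves two complementary subspaces, spanned by the columns of `U` and of `V`, and acts
on them by `A` and `B`, then its characteristic polynomial is the product of theirs. -/
lemma charpoly_split {N p q : ℕ} (hN : N = p + q) (M : Matrix (Fin N) (Fin N) ℝ)
    (U : Matrix (Fin N) (Fin p) ℝ) (V : Matrix (Fin N) (Fin q) ℝ)
    (U' : Matrix (Fin p) (Fin N) ℝ) (V' : Matrix (Fin q) (Fin N) ℝ)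
    (A : Matrix (Fin p) (Fin p) ℝ) (B : Matrix (Fin q) (Fin q) ℝ)
    (h1 : U * U' + V * V' = 1) (hU : M * U = U * A) (hV : M * V = V * B) :
    M.charpoly = A.charpoly * B.charpoly := by
  have e1 : Matrix.fromCols U V * Matrix.fromRows U' V' = 1 := by
    rw [Matrix.fromCols_mul_fromRows, h1]
  have e2 : Matrix.fromRows U' V' * Matrix.fromCols U V = 1 :=
    (Matrix.mul_eq_one_comm_of_card_eq _ _ _ (by simp [hN])).1 e1
  have e3 : M * Matrix.fromCols U V = Matrix.fromCols U V * Matrix.fromBlocks A 0 0 B := by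
    rw [Matrix.mul_fromCols, hU, hV, Matrix.fromCols_mul_fromBlocks]
    simp
  have e4 : M = Matrix.fromCols U V * (Matrix.fromBlocks A 0 0 B * Matrix.fromRows U' V') := by
    rw [← Matrix.mul_assoc, ← e3, Matrix.mul_assoc, e1, Matrix.mul_one]
  rw [e4, Matrix.charpoly_mul_comm_of_le _ _ (by simp [hN]), Matrix.mul_assoc, e2,
    Matrix.mul_one, Matrix.charpoly_fromBlocks_zero₁₂]
  simp [hN]

/-- The coefficients, from degree `0` to degree `4`, of the negative of the characteristic
polynomial of the quotient matrix of `D` for `l = 2`. -/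
def quotCoeffs2 (t : ℝ) : List ℝ :=
  [5 * t ^ 2 - 4 * t,
   14 * t ^ 2 - 12 * t,
   8 * t ^ 2 - 4 * t - 4,
   2 * t - 4,
   -1]

set_option maxHeartbeats 1000000 in
/-- The quotient matrix commutes with the reflection `a ↦ l + 1 - a`, so it splits into its actions
on the symmetric vectors (spanned by the columns of the first matrix given to `charpoly_split`) and
the antisymmetric ones (columns of the second), and only determinants of about half the size remain.
The same argument gives the next three lemmas. -/
lemma quot_charpoly_2 (t : ℕ) :
    ((Matrix.diagonal (wt t (2 + 2)) * kmat (2 + 2)).charpoly).comp (X + 1) =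
      -∑ j ∈ Finset.range (2 + 2 + 1), C ((quotCoeffs2 t).getD j 0) * X ^ j := by
  obtain ⟨w, hw⟩ : ∃ w : ℝ, w = (t : ℝ) - 1 := ⟨_, rfl⟩
  have hM : Matrix.diagonal (wt t 4) * kmat 4 =
      !![w, w, 2 * w, 3 * w; 1, 1, 1, 2; 2, 1, 1, 1; 3 * w, 2 * w, w, w] := by
    ext i j
    fin_cases i <;> fin_cases j <;>
      simp [kmat, wt, hw, Fin.ext_iff] <;> norm_num <;> try ring
  rw [hM, charpoly_split rfl _
    !![1, 0; 0, 1; 0, 1; 1, 0]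
    !![1, 0; 0, 1; 0, -1; -1, 0]
    !![1 / 2, 0, 0, 1 / 2; 0, 1 / 2, 1 / 2, 0]
    !![1 / 2, 0, 0, -1 / 2; 0, 1 / 2, -1 / 2, 0]
    !![4 * w, 3 * w; 3, 2]
    !![-2 * w, -w; -1, 0]
    (by ext i j; fin_cases i <;> fin_cases j <;> simp <;> norm_num)
    (by ext i j; fin_cases i <;> fin_cases j <;>
      simp [Matrix.mul_apply, Fin.sum_univ_succ] <;> ring)
    (by ext i j; fin_cases i <;> fin_cases j <;>
      simp [Matrix.mul_apply, Fin.sum_univ_succ] <;> ring)]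
  obtain rfl : w = (t : ℝ) - 1 := hw
  refine Polynomial.funext fun x => ?_
  rw [eval_comp, eval_mul, Matrix.eval_charpoly, Matrix.eval_charpoly]
  simp [Matrix.det_succ_row_zero, Fin.sum_univ_succ, Finset.sum_range_succ, quotCoeffs2,
    Fin.succAbove]
  ring

/-- The coefficients, from degree `0` to degree `5`, of the negative of the characteristic
polynomial of the quotient matrix of `D` for `l = 3`. -/
def quotCoeffs3 (t : ℝ) : List ℝ :=
  [12 * t ^ 2 - 8 * t,
   46 * t ^ 2 - 32 * t,
   52 * t ^ 2 - 32 * t - 4,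
   15 * t ^ 2 - 10,
   2 * t - 4,
   -1]

set_option maxHeartbeats 1000000 in
lemma quot_charpoly_3 (t : ℕ) :
    ((Matrix.diagonal (wt t (3 + 2)) * kmat (3 + 2)).charpoly).comp (X + 1) =
      -∑ j ∈ Finset.range (3 + 2 + 1), C ((quotCoeffs3 t).getD j 0) * X ^ j := by
  obtain ⟨w, hw⟩ : ∃ w : ℝ, w = (t : ℝ) - 1 := ⟨_, rfl⟩
  have hM : Matrix.diagonal (wt t 5) * kmat 5 =
      !![w, w, 2 * w, 3 * w, 4 * w; 1, 1, 1, 2, 3; 2, 1, 1, 1, 2; 3, 2, 1, 1, 1;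
         4 * w, 3 * w, 2 * w, w, w] := by
    ext i j
    fin_cases i <;> fin_cases j <;>
      simp [kmat, wt, hw, Fin.ext_iff] <;> norm_num <;> try ring
  rw [hM, charpoly_split rfl _
    !![1, 0, 0; 0, 1, 0; 0, 0, 1; 0, 1, 0; 1, 0, 0]
    !![1, 0; 0, 1; 0, 0; 0, -1; -1, 0]
    !![1 / 2, 0, 0, 0, 1 / 2; 0, 1 / 2, 0, 1 / 2, 0; 0, 0, 1, 0, 0]
    !![1 / 2, 0, 0, 0, -1 / 2; 0, 1 / 2, 0, -1 / 2, 0]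
    !![5 * w, 4 * w, 2 * w; 4, 3, 1; 4, 2, 1]
    !![-3 * w, -2 * w; -2, -1]
    (by ext i j; fin_cases i <;> fin_cases j <;> simp <;> norm_num)
    (by ext i j; fin_cases i <;> fin_cases j <;>
      simp [Matrix.mul_apply, Fin.sum_univ_succ] <;> ring)
    (by ext i j; fin_cases i <;> fin_cases j <;>
      simp [Matrix.mul_apply, Fin.sum_univ_succ] <;> ring)]
  obtain rfl : w = (t : ℝ) - 1 := hw
  refine Polynomial.funext fun x => ?_
  rw [eval_comp, eval_mul, Matrix.eval_charpoly, Matrix.eval_charpoly]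
  simp [Matrix.det_succ_row_zero, Fin.sum_univ_succ, Finset.sum_range_succ, quotCoeffs3,
    Fin.succAbove]
  ring

/-- The coefficients, from degree `0` to degree `6`, of the negative of the characteristic
polynomial of the quotient matrix of `D` for `l = 4`. -/
def quotCoeffs4 (t : ℝ) : List ℝ :=
  [28 * t ^ 2 - 16 * t,
   136 * t ^ 2 - 80 * t,
   224 * t ^ 2 - 120 * t - 8,
   140 * t ^ 2 - 44 * t - 24,
   24 * t ^ 2 + 14 * t - 19,
   2 * t - 4,
   -1]

set_option maxHeartbeats 1000000 in
lemma quot_charpoly_4 (t : ℕ) :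
    ((Matrix.diagonal (wt t (4 + 2)) * kmat (4 + 2)).charpoly).comp (X + 1) =
      -∑ j ∈ Finset.range (4 + 2 + 1), C ((quotCoeffs4 t).getD j 0) * X ^ j := by
  obtain ⟨w, hw⟩ : ∃ w : ℝ, w = (t : ℝ) - 1 := ⟨_, rfl⟩
  have hM : Matrix.diagonal (wt t 6) * kmat 6 =
      !![w, w, 2 * w, 3 * w, 4 * w, 5 * w; 1, 1, 1, 2, 3, 4; 2, 1, 1, 1, 2, 3; 3, 2, 1, 1, 1, 2;
         4, 3, 2, 1, 1, 1; 5 * w, 4 * w, 3 * w, 2 * w, w, w] := by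
    ext i j
    fin_cases i <;> fin_cases j <;>
      simp [kmat, wt, hw, Fin.ext_iff] <;> norm_num <;> try ring
  rw [hM, charpoly_split rfl _
    !![1, 0, 0; 0, 1, 0; 0, 0, 1; 0, 0, 1; 0, 1, 0; 1, 0, 0]
    !![1, 0, 0; 0, 1, 0; 0, 0, 1; 0, 0, -1; 0, -1, 0; -1, 0, 0]
    !![1 / 2, 0, 0, 0, 0, 1 / 2; 0, 1 / 2, 0, 0, 1 / 2, 0; 0, 0, 1 / 2, 1 / 2, 0, 0]
    !![1 / 2, 0, 0, 0, 0, -1 / 2; 0, 1 / 2, 0, 0, -1 / 2, 0; 0, 0, 1 / 2, -1 / 2, 0, 0]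
    !![6 * w, 5 * w, 5 * w; 5, 4, 3; 5, 3, 2]
    !![-4 * w, -3 * w, -w; -3, -2, -1; -1, -1, 0]
    (by ext i j; fin_cases i <;> fin_cases j <;> simp <;> norm_num)
    (by ext i j; fin_cases i <;> fin_cases j <;>
      simp [Matrix.mul_apply, Fin.sum_univ_succ] <;> ring)
    (by ext i j; fin_cases i <;> fin_cases j <;>
      simp [Matrix.mul_apply, Fin.sum_univ_succ] <;> ring)]
  obtain rfl : w = (t : ℝ) - 1 := hw
  refine Polynomial.funext fun x => ?_
  rw [eval_comp, eval_mul, Matrix.eval_charpoly, Matrix.eval_charpoly]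
  simp [Matrix.det_succ_row_zero, Fin.sum_univ_succ, Finset.sum_range_succ, quotCoeffs4,
    Fin.succAbove]
  ring

/-- The coefficients, from degree `0` to degree `7`, of the negative of the characteristic
polynomial of the quotient matrix of `D` for `l = 5`. -/
def quotCoeffs5 (t : ℝ) : List ℝ :=
  [64 * t ^ 2 - 32 * t,
   376 * t ^ 2 - 192 * t,
   812 * t ^ 2 - 384 * t - 16,
   778 * t ^ 2 - 264 * t - 64,
   310 * t ^ 2 + 6 * t - 76,
   35 * t ^ 2 + 42 * t - 28,
   2 * t - 4,
   -1]

set_option maxHeartbeats 1000000 in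
lemma quot_charpoly_5 (t : ℕ) :
    ((Matrix.diagonal (wt t (5 + 2)) * kmat (5 + 2)).charpoly).comp (X + 1) =
      -∑ j ∈ Finset.range (5 + 2 + 1), C ((quotCoeffs5 t).getD j 0) * X ^ j := by
  obtain ⟨w, hw⟩ : ∃ w : ℝ, w = (t : ℝ) - 1 := ⟨_, rfl⟩
  have hM : Matrix.diagonal (wt t 7) * kmat 7 =
      !![w, w, 2 * w, 3 * w, 4 * w, 5 * w, 6 * w; 1, 1, 1, 2, 3, 4, 5; 2, 1, 1, 1, 2, 3, 4;
         3, 2, 1, 1, 1, 2, 3; 4, 3, 2, 1, 1, 1, 2; 5, 4, 3, 2, 1, 1, 1;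
         6 * w, 5 * w, 4 * w, 3 * w, 2 * w, w, w] := by
    ext i j
    fin_cases i <;> fin_cases j <;>
      simp [kmat, wt, hw, Fin.ext_iff] <;> norm_num <;> try ring
  rw [hM, charpoly_split rfl _
    !![1, 0, 0, 0; 0, 1, 0, 0; 0, 0, 1, 0; 0, 0, 0, 1; 0, 0, 1, 0; 0, 1, 0, 0; 1, 0, 0, 0]
    !![1, 0, 0; 0, 1, 0; 0, 0, 1; 0, 0, 0; 0, 0, -1; 0, -1, 0; -1, 0, 0]
    !![1 / 2, 0, 0, 0, 0, 0, 1 / 2; 0, 1 / 2, 0, 0, 0, 1 / 2, 0; 0, 0, 1 / 2, 0, 1 / 2, 0, 0;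
       0, 0, 0, 1, 0, 0, 0]
    !![1 / 2, 0, 0, 0, 0, 0, -1 / 2; 0, 1 / 2, 0, 0, 0, -1 / 2, 0; 0, 0, 1 / 2, 0, -1 / 2, 0, 0]
    !![7 * w, 6 * w, 6 * w, 3 * w; 6, 5, 4, 2; 6, 4, 3, 1; 6, 4, 2, 1]
    !![-5 * w, -4 * w, -2 * w; -4, -3, -2; -2, -2, -1]
    (by ext i j; fin_cases i <;> fin_cases j <;> simp <;> norm_num)
    (by ext i j; fin_cases i <;> fin_cases j <;>
      simp [Matrix.mul_apply, Fin.sum_univ_succ] <;> ring)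
    (by ext i j; fin_cases i <;> fin_cases j <;>
      simp [Matrix.mul_apply, Fin.sum_univ_succ] <;> ring)]
  obtain rfl : w = (t : ℝ) - 1 := hw
  refine Polynomial.funext fun x => ?_
  rw [eval_comp, eval_mul, Matrix.eval_charpoly, Matrix.eval_charpoly]
  simp [Matrix.det_succ_row_zero, Fin.sum_univ_succ, Finset.sum_range_succ, quotCoeffs5,
    Fin.succAbove]
  ring

/-! ### Differences of consecutive coefficients -/

/-- `∑ j, r_j k(k-1)⋯(k-j+1) · v(v-1)⋯(v-(d-j)+1)`. For `k + v = m + d` this is the coefficient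
of `X ^ k` in `(X + 1) ^ m * ∑ j, r_j X ^ j`, up to the factor `k! v! / m!`. -/
noncomputable def wsum (r : List ℝ) (d : ℕ) (k v : ℝ) : ℝ :=
  ∑ j ∈ Finset.range (d + 1),
    r.getD j 0 * (∏ i ∈ Finset.range j, (k - i)) * ∏ i ∈ Finset.range (d - j), (v - i)

/-- A positive multiple of the difference of the coefficients of `X ^ k` and `X ^ (k + 1)` in
`(X + 1) ^ m * ∑ j, r_j X ^ j`, where `k + v = m + d`; it is polynomial in `k`, `v` and
the `r_j`. -/
noncomputable def gap (r : List ℝ) (d : ℕ) (k v : ℝ) : ℝ :=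
  (k + 1) * wsum r d k v - v * wsum r d (k + 1) (v - 1)

lemma cast_descFactorial (n j : ℕ) :
    (n.descFactorial j : ℝ) = ∏ i ∈ Finset.range j, ((n : ℝ) - i) := by
  rw [← descPochhammer_eval_eq_descFactorial, descPochhammer_eval_eq_prod_range]

/-- The identity holds without restricting `k - j` to `0, …, m`: outside that range one of the two
falling factorials vanishes. -/
lemma choose_mul_factorials (m d j k v : ℕ) (hj : j ≤ d) (hk : k + v = m + d) :
    (if j ≤ k then m.choose (k - j) else 0) * (k.factorial * v.factorial) =
      m.factorial * (k.descFactorial j * v.descFactorial (d - j)) := by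
  split_ifs with h
  · by_cases h2 : k - j ≤ m
    · have e1 := Nat.factorial_mul_descFactorial h
      have e2 := Nat.factorial_mul_descFactorial (show d - j ≤ v by omega)
      have e3 := Nat.choose_mul_factorial_mul_factorial h2
      rw [show m - (k - j) = v - (d - j) by omega] at e3
      rw [← e1, ← e2, ← e3]
      ring
    · rw [Nat.choose_eq_zero_of_lt (by omega), Nat.descFactorial_of_lt (show v < d - j by omega)]
      simp
  · rw [Nat.descFactorial_of_lt (show k < j by omega)]
    simp

lemma coeff_mul_factorials (r : List ℝ) (m d k v : ℕ) (hk : k + v = m + d) :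
    ((X + 1) ^ m * ∑ j ∈ Finset.range (d + 1), C (r.getD j 0) * X ^ j).coeff k *
        (k.factorial * v.factorial) = m.factorial * wsum r d k v := by
  rw [Finset.mul_sum, finsetSum_coeff, Finset.sum_mul, wsum, Finset.mul_sum]
  refine Finset.sum_congr rfl fun j hj => ?_
  have hj' : j ≤ d := Nat.lt_succ_iff.1 (Finset.mem_range.1 hj)
  have h := congrArg (Nat.cast : ℕ → ℝ) (choose_mul_factorials m d j k v hj' hk)
  push_cast at h
  rw [cast_descFactorial, cast_descFactorial] at h
  rw [show (X + 1 : ℝ[X]) ^ m * (C (r.getD j 0) * X ^ j) =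
    C (r.getD j 0) * ((X + 1) ^ m * X ^ j) by ring, coeff_C_mul, coeff_mul_X_pow',
    coeff_X_add_one_pow]
  linear_combination (r.getD j 0) * h

lemma coeff_sub_coeff (r : List ℝ) (m d k v : ℕ) (hk : k + v = m + d) (hv : 0 < v) :
    ∃ c : ℝ, 0 < c ∧
      c * (((X + 1) ^ m * ∑ j ∈ Finset.range (d + 1), C (r.getD j 0) * X ^ j).coeff k -
        ((X + 1) ^ m * ∑ j ∈ Finset.range (d + 1), C (r.getD j 0) * X ^ j).coeff (k + 1)) =
      m.factorial * gap r d k v := by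
  obtain ⟨v, rfl⟩ : ∃ v', v = v' + 1 := ⟨v - 1, by omega⟩
  refine ⟨(k + 1).factorial * (v + 1).factorial, by positivity, ?_⟩
  have h1 := coeff_mul_factorials r m d k (v + 1) hk
  have h2 := coeff_mul_factorials r m d (k + 1) v (by omega)
  rw [gap]
  push_cast [Nat.factorial_succ, add_sub_cancel_right] at h1 h2 ⊢
  linear_combination ((k : ℝ) + 1) * h1 - ((v : ℝ) + 1) * h2

/-! ### Signs of the differences -/

set_option maxHeartbeats 4000000 in
/-- Here and in the next lemmas, `u` and `s` parametrize the indices on one side of the peak: on the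
left `u` is the index and `s` its distance to the last index before the peak; on the right `s` is
the distance to the peak and `u` the distance to the last index `n - 3`. After shifting `s` and `u`
by suitable constants, the sign is that of all coefficients of a polynomial in `s` and `u`. -/
lemma gap_left_2 (s u : ℕ) :
    gap (quotCoeffs2 ((s : ℝ) + u + 2)) 4 (u : ℝ) (2 * (s : ℝ) + u + 4) ≤ 0 := by
  simp [gap, wsum, Finset.sum_range_succ, Finset.prod_range_succ, quotCoeffs2]
  rw [← sub_nonneg]
  ring_nf
  positivity

set_option maxHeartbeats 4000000 in
lemma gap_right_2 (s u : ℕ) :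
    0 ≤ gap (quotCoeffs2 ((s : ℝ) + u + 2)) 4 (2 * (s : ℝ) + u + 1) ((u : ℝ) + 3) := by
  simp [gap, wsum, Finset.sum_range_succ, Finset.prod_range_succ, quotCoeffs2]
  rw [← sub_nonneg]
  ring_nf
  positivity

set_option maxHeartbeats 4000000 in
lemma gap_left_3 (s u : ℕ) (h : 2 ≤ s + u) :
    gap (quotCoeffs3 ((s : ℝ) + u + 1)) 5 (u : ℝ) (2 * (s : ℝ) + u + 3) ≤ 0 := by
  rcases (by omega : 1 ≤ u ∨ 1 ≤ s) with h1 | h1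
  · obtain ⟨u, rfl⟩ := Nat.exists_eq_add_of_le h1
    push_cast
    simp [gap, wsum, Finset.sum_range_succ, Finset.prod_range_succ, quotCoeffs3]
    rw [← sub_nonneg]
    ring_nf
    positivity
  · obtain ⟨s, rfl⟩ := Nat.exists_eq_add_of_le h1
    push_cast
    simp [gap, wsum, Finset.sum_range_succ, Finset.prod_range_succ, quotCoeffs3]
    rw [← sub_nonneg]
    ring_nf
    positivity

set_option maxHeartbeats 4000000 in
lemma gap_right_3 (s u : ℕ) :
    0 ≤ gap (quotCoeffs3 ((s : ℝ) + u + 2)) 5 (2 * (s : ℝ) + u + 2) ((u : ℝ) + 3) := by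
  simp [gap, wsum, Finset.sum_range_succ, Finset.prod_range_succ, quotCoeffs3]
  rw [← sub_nonneg]
  ring_nf
  positivity

set_option maxHeartbeats 4000000 in
lemma gap_left_4 (s u : ℕ) (h : 2 ≤ s + u) :
    gap (quotCoeffs4 ((s : ℝ) + u + 1)) 6 (u : ℝ) (2 * (s : ℝ) + u + 4) ≤ 0 := by
  rcases (by omega : 1 ≤ u ∨ 1 ≤ s) with h1 | h1
  · obtain ⟨u, rfl⟩ := Nat.exists_eq_add_of_le h1
    push_cast
    simp [gap, wsum, Finset.sum_range_succ, Finset.prod_range_succ, quotCoeffs4]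
    rw [← sub_nonneg]
    ring_nf
    positivity
  · obtain ⟨s, rfl⟩ := Nat.exists_eq_add_of_le h1
    push_cast
    simp [gap, wsum, Finset.sum_range_succ, Finset.prod_range_succ, quotCoeffs4]
    rw [← sub_nonneg]
    ring_nf
    positivity

set_option maxHeartbeats 4000000 in
lemma gap_right_4 (s u : ℕ) (h : 2 ≤ s + u) :
    0 ≤ gap (quotCoeffs4 ((s : ℝ) + u + 1)) 6 (2 * (s : ℝ) + u + 1) ((u : ℝ) + 3) := by
  rcases (by omega : 1 ≤ u ∨ 1 ≤ s) with h1 | h1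
  · obtain ⟨u, rfl⟩ := Nat.exists_eq_add_of_le h1
    push_cast
    simp [gap, wsum, Finset.sum_range_succ, Finset.prod_range_succ, quotCoeffs4]
    rw [← sub_nonneg]
    ring_nf
    positivity
  · obtain ⟨s, rfl⟩ := Nat.exists_eq_add_of_le h1
    push_cast
    simp [gap, wsum, Finset.sum_range_succ, Finset.prod_range_succ, quotCoeffs4]
    rw [← sub_nonneg]
    ring_nf
    positivity

set_option maxHeartbeats 4000000 in
lemma gap_left_5 (s u : ℕ) (h : 2 ≤ s + u) :
    gap (quotCoeffs5 ((s : ℝ) + u + 1)) 7 (u : ℝ) (2 * (s : ℝ) + u + 5) ≤ 0 := by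
  rcases (by omega : 1 ≤ u ∨ 1 ≤ s) with h1 | h1
  · obtain ⟨u, rfl⟩ := Nat.exists_eq_add_of_le h1
    push_cast
    simp [gap, wsum, Finset.sum_range_succ, Finset.prod_range_succ, quotCoeffs5]
    rw [← sub_nonneg]
    ring_nf
    positivity
  · obtain ⟨s, rfl⟩ := Nat.exists_eq_add_of_le h1
    push_cast
    simp [gap, wsum, Finset.sum_range_succ, Finset.prod_range_succ, quotCoeffs5]
    rw [← sub_nonneg]
    ring_nf
    positivity

set_option maxHeartbeats 4000000 in
lemma gap_right_5 (s u : ℕ) (h : 3 ≤ s + u) :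
    0 ≤ gap (quotCoeffs5 ((s : ℝ) + u)) 7 (2 * (s : ℝ) + u) ((u : ℝ) + 3) := by
  rcases (by omega : 3 ≤ u ∨ 1 ≤ s ∧ 1 ≤ u ∨ 2 ≤ s) with h1 | ⟨h1, h2⟩ | h1
  · obtain ⟨u, rfl⟩ := Nat.exists_eq_add_of_le h1
    push_cast
    simp [gap, wsum, Finset.sum_range_succ, Finset.prod_range_succ, quotCoeffs5]
    rw [← sub_nonneg]
    ring_nf
    positivity
  · obtain ⟨s, rfl⟩ := Nat.exists_eq_add_of_le h1
    obtain ⟨u, rfl⟩ := Nat.exists_eq_add_of_le h2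
    push_cast
    simp [gap, wsum, Finset.sum_range_succ, Finset.prod_range_succ, quotCoeffs5]
    rw [← sub_nonneg]
    ring_nf
    positivity
  · obtain ⟨s, rfl⟩ := Nat.exists_eq_add_of_le h1
    push_cast
    simp [gap, wsum, Finset.sum_range_succ, Finset.prod_range_succ, quotCoeffs5]
    rw [← sub_nonneg]
    ring_nf
    positivity

/-! ### Assembly -/

lemma normCoeff_eq {t l : ℕ} (ht : 3 ≤ t) (hl : 2 ≤ l) (r : List ℝ)
    (hq : ((Matrix.diagonal (wt t (l + 2)) * kmat (l + 2)).charpoly).comp (X + 1) =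
      -∑ j ∈ Finset.range (l + 2 + 1), C (r.getD j 0) * X ^ j) (i : ℕ) :
    barbellNormCoeff t l i = ((X + 1) ^ (2 * t - 4) *
      ∑ j ∈ Finset.range (l + 2 + 1), C (r.getD j 0) * X ^ j).coeff i := by
  rw [barbellNormCoeff, distCoeff, charpoly_dist ht hl, hq, mul_neg, coeff_neg, Fintype.card_fin]
  obtain ⟨n, hn⟩ : ∃ n, 2 * t + l - 2 = n + 1 := ⟨2 * t + l - 3, by omega⟩
  have h1 : ((-1 : ℝ) ^ n) * (-1) ^ n = 1 := by rw [← mul_pow]; simp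
  rw [hn, Nat.add_sub_cancel, pow_succ]
  linear_combination ((X + 1) ^ (2 * t - 4) *
    ∑ j ∈ Finset.range (l + 2 + 1), C (r.getD j 0) * X ^ j).coeff i * h1

lemma normCoeff_le_succ {t l : ℕ} (ht : 3 ≤ t) (hl : 2 ≤ l) (r : List ℝ)
    (hq : ((Matrix.diagonal (wt t (l + 2)) * kmat (l + 2)).charpoly).comp (X + 1) =
      -∑ j ∈ Finset.range (l + 2 + 1), C (r.getD j 0) * X ^ j) (k v : ℕ)
    (hk : k + v = 2 * t + l - 2) (hv : 0 < v) (h : gap r (l + 2) k v ≤ 0) :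
    barbellNormCoeff t l k ≤ barbellNormCoeff t l (k + 1) := by
  obtain ⟨c, hc, e⟩ := coeff_sub_coeff r (2 * t - 4) (l + 2) k v (by omega) hv
  rw [← normCoeff_eq ht hl r hq, ← normCoeff_eq ht hl r hq] at e
  have h2 : c * (barbellNormCoeff t l k - barbellNormCoeff t l (k + 1)) ≤ 0 :=
    e ▸ mul_nonpos_of_nonneg_of_nonpos (Nat.cast_nonneg _) h
  exact sub_nonpos.1 (nonpos_of_mul_nonpos_right h2 hc)

lemma normCoeff_succ_le {t l : ℕ} (ht : 3 ≤ t) (hl : 2 ≤ l) (r : List ℝ)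
    (hq : ((Matrix.diagonal (wt t (l + 2)) * kmat (l + 2)).charpoly).comp (X + 1) =
      -∑ j ∈ Finset.range (l + 2 + 1), C (r.getD j 0) * X ^ j) (k v : ℕ)
    (hk : k + v = 2 * t + l - 2) (hv : 0 < v) (h : 0 ≤ gap r (l + 2) k v) :
    barbellNormCoeff t l (k + 1) ≤ barbellNormCoeff t l k := by
  obtain ⟨c, hc, e⟩ := coeff_sub_coeff r (2 * t - 4) (l + 2) k v (by omega) hv
  rw [← normCoeff_eq ht hl r hq, ← normCoeff_eq ht hl r hq] at e
  have h2 : 0 ≤ c * (barbellNormCoeff t l k - barbellNormCoeff t l (k + 1)) :=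
    e ▸ mul_nonneg (Nat.cast_nonneg _) h
  exact sub_nonneg.1 (nonneg_of_mul_nonneg_right h2 hc)

end Barbell

open Barbell

/-- For `t ≥ 3` and `ℓ ∈ {2,3,4,5}`, the sequence
`(-1)^(n-1) c_0(B(t,ℓ)), …, (-1)^(n-1) c_(n-2)(B(t,ℓ))` (with `n = 2t + ℓ - 2`) is
unimodal with peak at index `t-1` if `ℓ = 2` and at index `t` if `ℓ ∈ {3,4,5}`. -/
theorem barbell_distCoeff_unimodal_peak (t l : ℕ) (ht : 3 ≤ t)
    (hl : l ∈ ({2, 3, 4, 5} : Set ℕ)) :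
    (∀ i : ℕ, i < (if l = 2 then t - 1 else t) →
      barbellNormCoeff t l i ≤ barbellNormCoeff t l (i + 1)) ∧
    (∀ i : ℕ, (if l = 2 then t - 1 else t) ≤ i → i < 2 * t + l - 2 - 2 →
      barbellNormCoeff t l (i + 1) ≤ barbellNormCoeff t l i) := by
  simp only [Set.mem_insert_iff, Set.mem_singleton_iff] at hl
  rcases hl with rfl | rfl | rfl | rfl
  · refine ⟨fun i hi => ?_, fun i hi hi' => ?_⟩
    · obtain ⟨s, rfl⟩ : ∃ s, t = s + i + 2 := ⟨t - i - 2, by simp at hi; omega⟩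
      refine normCoeff_le_succ ht (by norm_num) _ (quot_charpoly_2 _) i (2 * s + i + 4)
        (by omega) (by omega) ?_
      have h := gap_left_2 s i
      push_cast
      exact h
    · obtain ⟨s, u, rfl, rfl⟩ : ∃ s u, t = s + u + 2 ∧ i = 2 * s + u + 1 :=
        ⟨i - (t - 1), 2 * t + 2 - 5 - i,
          by simp at hi; omega, by simp at hi; omega⟩
      refine normCoeff_succ_le ht (by norm_num) _ (quot_charpoly_2 _) _ (u + 3)
        (by omega) (by omega) ?_
      have h := gap_right_2 s u
      push_cast
      exact h
  · refine ⟨fun i hi => ?_, fun i hi hi' => ?_⟩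
    · obtain ⟨s, rfl⟩ : ∃ s, t = s + i + 1 := ⟨t - i - 1, by simp at hi; omega⟩
      refine normCoeff_le_succ ht (by norm_num) _ (quot_charpoly_3 _) i (2 * s + i + 3)
        (by omega) (by omega) ?_
      have h := gap_left_3 s i (by omega)
      push_cast
      exact h
    · obtain ⟨s, u, rfl, rfl⟩ : ∃ s u, t = s + u + 2 ∧ i = 2 * s + u + 2 :=
        ⟨i - t, 2 * t + 3 - 5 - i,
          by simp at hi; omega, by simp at hi; omega⟩
      refine normCoeff_succ_le ht (by norm_num) _ (quot_charpoly_3 _) _ (u + 3)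
        (by omega) (by omega) ?_
      have h := gap_right_3 s u
      push_cast
      exact h
  · refine ⟨fun i hi => ?_, fun i hi hi' => ?_⟩
    · obtain ⟨s, rfl⟩ : ∃ s, t = s + i + 1 := ⟨t - i - 1, by simp at hi; omega⟩
      refine normCoeff_le_succ ht (by norm_num) _ (quot_charpoly_4 _) i (2 * s + i + 4)
        (by omega) (by omega) ?_
      have h := gap_left_4 s i (by omega)
      push_cast
      exact h
    · obtain ⟨s, u, rfl, rfl⟩ : ∃ s u, t = s + u + 1 ∧ i = 2 * s + u + 1 :=
        ⟨i - t, 2 * t + 4 - 5 - i,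
          by simp at hi; omega, by simp at hi; omega⟩
      refine normCoeff_succ_le ht (by norm_num) _ (quot_charpoly_4 _) _ (u + 3)
        (by omega) (by omega) ?_
      have h := gap_right_4 s u (by omega)
      push_cast
      exact h
  · refine ⟨fun i hi => ?_, fun i hi hi' => ?_⟩
    · obtain ⟨s, rfl⟩ : ∃ s, t = s + i + 1 := ⟨t - i - 1, by simp at hi; omega⟩
      refine normCoeff_le_succ ht (by norm_num) _ (quot_charpoly_5 _) i (2 * s + i + 5)
        (by omega) (by omega) ?_
      have h := gap_left_5 s i (by omega)
      push_cast
      exact h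
    · obtain ⟨s, u, rfl, rfl⟩ : ∃ s u, t = s + u ∧ i = 2 * s + u :=
        ⟨i - t, 2 * t + 5 - 5 - i,
          by simp at hi; omega, by simp at hi; omega⟩
      refine normCoeff_succ_le ht (by norm_num) _ (quot_charpoly_5 _) _ (u + 3)
        (by omega) (by omega) ?_
      have h := gap_right_5 s u (by omega)
      push_cast
      exact h
end
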